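/- Let q ≥ 5 be an odd prime power. The UΓ-lines of the twisted cubic C form a single orbit of size q² + q under G_q. Moreover, the stabilizer in G_q of the UΓ-line ℓ through (0:0:0:1) and (0:1:0:0) consists exactly of the projectivities induced by the diagonal matrices diag(1, d, d², d³) with d ∈ F_q^*, hence has order q − 1. -/

import Mathlib

open Matrix Submodule

noncomputable section

/-- Row-vector action of an invertible matrix on subspaces of `F^4`:
a projectivity of `PG(3,q)` induced by the matrix. -/
def projAct (F : Type) [Field F] (A : GL (Fin 4) F) :
    Submodule F (Fin 4 → F) → Submodule F (Fin 4 → F) :=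
  fun W => W.map (Matrix.vecMulLinear (A : Matrix (Fin 4) (Fin 4) F))

/-- Representative vectors of the points of the twisted cubic. -/
def cubicVecs (F : Type) [Field F] : Set (Fin 4 → F) :=
  {v | (∃ t : F, v = ![t ^ 3, t ^ 2, t, 1]) ∨ v = ![1, 0, 0, 0]}

/-- The twisted cubic, as a set of projective points (1-dimensional subspaces). -/
def twistedCubic (F : Type) [Field F] : Set (Submodule F (Fin 4 → F)) :=
  (fun v => Submodule.span F {v}) '' cubicVecs F

/-- The group `G_q` of projectivities fixing the twisted cubic, modeled as those maps
on subspaces that are induced by an invertible matrix and map the cubic onto itself. -/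
def Gq (F : Type) [Field F] :
    Set ((Submodule F (Fin 4 → F)) → (Submodule F (Fin 4 → F))) :=
  {f | (∃ A : GL (Fin 4) F, f = projAct F A) ∧ f '' twistedCubic F = twistedCubic F}

def isPoint (F : Type) [Field F] (W : Submodule F (Fin 4 → F)) : Prop :=
  Module.finrank F W = 1

def isLine (F : Type) [Field F] (W : Submodule F (Fin 4 → F)) : Prop :=
  Module.finrank F W = 2

/-- The orbit of a line under `G_q`. -/
def lineOrbit (F : Type) [Field F] (ℓ : Submodule F (Fin 4 → F)) :
    Set (Submodule F (Fin 4 → F)) :=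
  {m | ∃ f ∈ Gq F, f ℓ = m}

/-- The stabilizer of a line in `G_q`. -/
def lineStab (F : Type) [Field F] (ℓ : Submodule F (Fin 4 → F)) :
    Set ((Submodule F (Fin 4 → F)) → (Submodule F (Fin 4 → F))) :=
  {f ∈ Gq F | f ℓ = ℓ}

/-- The linear form `y ↦ c0 y0 + c1 y1 + c2 y2 + c3 y3` defining a plane. -/
def planeForm (F : Type) [Field F] (c : Fin 4 → F) : (Fin 4 → F) →ₗ[F] F where
  toFun y := c 0 * y 0 + c 1 * y 1 + c 2 * y 2 + c 3 * y 3
  map_add' a b := by simp only [Pi.add_apply]; ring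
  map_smul' r a := by simp only [Pi.smul_apply, smul_eq_mul, RingHom.id_apply]; ring

/-- The plane `π(c0,c1,c2,c3)`. -/
def planeOf (F : Type) [Field F] (c : Fin 4 → F) : Submodule F (Fin 4 → F) :=
  LinearMap.ker (planeForm F c)

/-- The null polarity `𝔄`: the polar subspace of `W` w.r.t. the bilinear form
sending a point `(x0:x1:x2:x3)` to the plane `π(x3, −3x2, 3x1, −x0)`. -/
def nullPolarity (F : Type) [Field F] (W : Submodule F (Fin 4 → F)) :
    Submodule F (Fin 4 → F) :=
  ⨅ x ∈ (W : Set (Fin 4 → F)), planeOf F ![x 3, -(3 * x 2), 3 * x 1, -(x 0)]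

/-- The tangent line to the twisted cubic at `P(t)`, `t ∈ F`. -/
def tangentAt (F : Type) [Field F] (t : F) : Submodule F (Fin 4 → F) :=
  Submodule.span F {![t ^ 3, t ^ 2, t, 1], ![3 * t ^ 2, 2 * t, 1, 0]}

/-- The tangent line to the twisted cubic at `P(∞)`. -/
def tangentAtInf (F : Type) [Field F] : Submodule F (Fin 4 → F) :=
  Submodule.span F {![1, 0, 0, 0], ![0, 1, 0, 0]}

def isTangent (F : Type) [Field F] (ℓ : Submodule F (Fin 4 → F)) : Prop :=
  (∃ t : F, ℓ = tangentAt F t) ∨ ℓ = tangentAtInf F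

/-- The osculating plane at `P(t)`, `t ∈ F`. -/
def oscPlane (F : Type) [Field F] (t : F) : Submodule F (Fin 4 → F) :=
  planeOf F ![1, -(3 * t), 3 * t ^ 2, -(t ^ 3)]

/-- The osculating plane at `P(∞)`. -/
def oscPlaneInf (F : Type) [Field F] : Submodule F (Fin 4 → F) :=
  planeOf F ![0, 0, 0, 1]

def isOscPlane (F : Type) [Field F] (π : Submodule F (Fin 4 → F)) : Prop :=
  (∃ t : F, π = oscPlane F t) ∨ π = oscPlaneInf F

/-- A real chord: the line joining two distinct points of the twisted cubic. -/
def isRealChord (F : Type) [Field F] (ℓ : Submodule F (Fin 4 → F)) : Prop :=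
  ∃ u ∈ cubicVecs F, ∃ v ∈ cubicVecs F,
    Submodule.span F {u} ≠ Submodule.span F {v} ∧ ℓ = Submodule.span F {u, v}

/-- A real axis: the intersection of two distinct osculating planes. -/
def isRealAxis (F : Type) [Field F] (ℓ : Submodule F (Fin 4 → F)) : Prop :=
  ∃ π₁ π₂ : Submodule F (Fin 4 → F),
    isOscPlane F π₁ ∧ isOscPlane F π₂ ∧ π₁ ≠ π₂ ∧ ℓ = π₁ ⊓ π₂

/-- The `F_{q²}`-extension of a subspace of `F^4`. -/
def extendSub (F K : Type) [Field F] [Field K] [Algebra F K]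
    (W : Submodule F (Fin 4 → F)) : Submodule K (Fin 4 → K) :=
  Submodule.span K ((fun v i => algebraMap F K (v i)) '' (W : Set (Fin 4 → F)))

/-- An external line: a line containing no point of the twisted cubic. -/
def isExternal (F : Type) [Field F] (ℓ : Submodule F (Fin 4 → F)) : Prop :=
  isLine F ℓ ∧ ∀ P ∈ twistedCubic F, ¬ P ≤ ℓ

/-- An imaginary chord: a line disjoint from the cubic whose `F_{q²}`-extension joins a
pair of Frobenius-conjugate points `P(t)`, `P(t^q)` of the cubic over `F_{q²}`. -/
def isImagChord (F K : Type) [Field F] [Field K] [Algebra F K] (q : ℕ)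
    (ℓ : Submodule F (Fin 4 → F)) : Prop :=
  isExternal F ℓ ∧
  ∃ t : K, t ∉ Set.range (algebraMap F K) ∧
    extendSub F K ℓ =
      Submodule.span K
        ({![t ^ 3, t ^ 2, t, 1], ![(t ^ q) ^ 3, (t ^ q) ^ 2, t ^ q, 1]} :
          Set (Fin 4 → K))

/-- An imaginary axis: a line whose `F_{q²}`-extension is the intersection of a pair of
Frobenius-conjugate osculating planes `π_osc(t)`, `π_osc(t^q)` over `F_{q²}`. -/
def isImagAxis (F K : Type) [Field F] [Field K] [Algebra F K] (q : ℕ)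
    (ℓ : Submodule F (Fin 4 → F)) : Prop :=
  isLine F ℓ ∧
  ∃ t : K, t ∉ Set.range (algebraMap F K) ∧
    extendSub F K ℓ =
      planeOf K ![1, -(3 * t), 3 * t ^ 2, -(t ^ 3)] ⊓
        planeOf K ![1, -(3 * t ^ q), 3 * (t ^ q) ^ 2, -((t ^ q) ^ 3)]

/-- A unisecant: a line meeting the twisted cubic in exactly one point. -/
def isUnisecant (F : Type) [Field F] (ℓ : Submodule F (Fin 4 → F)) : Prop :=
  isLine F ℓ ∧ ∃! P, P ∈ twistedCubic F ∧ P ≤ ℓ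

/-- A `UΓ`-line: a non-tangent unisecant lying in some osculating plane. -/
def isUGamma (F : Type) [Field F] (ℓ : Submodule F (Fin 4 → F)) : Prop :=
  isUnisecant F ℓ ∧ ¬ isTangent F ℓ ∧ ∃ π, isOscPlane F π ∧ ℓ ≤ π

/-- A `UnΓ`-line: a non-tangent unisecant lying in no osculating plane. -/
def isUnGamma (F : Type) [Field F] (ℓ : Submodule F (Fin 4 → F)) : Prop :=
  isUnisecant F ℓ ∧ ¬ isTangent F ℓ ∧ ∀ π, isOscPlane F π → ¬ ℓ ≤ π

/-- An `EΓ`-line: an external line, other than an imaginary chord, lying in some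
osculating plane. -/
def isEGamma (F K : Type) [Field F] [Field K] [Algebra F K] (q : ℕ)
    (ℓ : Submodule F (Fin 4 → F)) : Prop :=
  isExternal F ℓ ∧ ¬ isImagChord F K q ℓ ∧ ∃ π, isOscPlane F π ∧ ℓ ≤ π

/-- For `q ≡ 0 (mod 3)`: the axis of `Γ`, the line `x0 = x3 = 0`. -/
def axisLine (F : Type) [Field F] : Submodule F (Fin 4 → F) :=
  Submodule.span F {![0, 1, 0, 0], ![0, 0, 1, 0]}

/-- For `q ≡ 0 (mod 3)`: an `EA`-line, i.e. an external line, other than an imaginary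
chord and other than the axis of `Γ`, meeting the axis of `Γ`. -/
def isEA (F K : Type) [Field F] [Field K] [Algebra F K] (q : ℕ)
    (ℓ : Submodule F (Fin 4 → F)) : Prop :=
  isExternal F ℓ ∧ ¬ isImagChord F K q ℓ ∧ ℓ ≠ axisLine F ∧ ℓ ⊓ axisLine F ≠ ⊥

end

/-!
The group `GL₂(F)` acts on binary cubic forms, hence on `PG(3,F)`, and preserves the twisted cubic
`C`. The points of `C`, its tangents and its osculating planes are the translates of the members of
the osculating flag at `P(0)`, so every UΓ-line is a translate of a line of the pencil through
`P(0)` in the osculating plane at `P(0)`, other than the tangent; there are `q` of these for each of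
the `q + 1` points of `C`.

As soon as `F` has at least five elements, every projectivity preserving `C` arises in this way.
After composing with an element of `GL₂(F)` it fixes `P(0)` and `P(∞)`, and then the equations
`x₁x₃ = x₂²` and `x₀x₃ = x₁x₂` of `C`, read as identities between polynomials of degree at most four
in the parameter `t`, force its matrix to be diagonal.

Finally, the unipotent substitution with parameter `c` moves the line of slope `0` in the pencil to
that of slope `2c`. For `2 ≠ 0` the pencil is therefore a single orbit of the unipotent group, and
only the diagonal substitutions stabilize the line of slope `0`.
-/

namespace TwistedCubic

section SymmetricCube

variable {R : Type*} [CommRing R]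

/-- The Veronese parametrization `(s, t) ↦ (s³, s²t, st², t³)` of the twisted cubic, so that `P(t)`
is the point spanned by `veronese ![t, 1]` and `P(∞)` the one spanned by `veronese ![1, 0]`. -/
def veronese (v : Fin 2 → R) : Fin 4 → R :=
  ![v 0 ^ 3, v 0 ^ 2 * v 1, v 0 * v 1 ^ 2, v 1 ^ 3]

/-- The derivative of `veronese` at `v` in direction `w`, i.e. the coefficient of `ε` in
`veronese (v + ε • w)`; it spans with `veronese v` the tangent line at that point. -/
def polar (v w : Fin 2 → R) : Fin 4 → R :=
  ![3 * v 0 ^ 2 * w 0, v 0 ^ 2 * w 1 + 2 * v 0 * v 1 * w 0,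
    v 1 ^ 2 * w 0 + 2 * v 0 * v 1 * w 1, 3 * v 1 ^ 2 * w 1]

lemma veronese_smul (k : R) (v : Fin 2 → R) : veronese (k • v) = k ^ 3 • veronese v := by
  ext i
  fin_cases i <;> simp [veronese] <;> ring

lemma one_zero_vecMul (g : Matrix (Fin 2) (Fin 2) R) : ![1, 0] ᵥ* g = g.row 0 := by
  ext j
  simp [vecMul, dotProduct]

lemma zero_one_vecMul (g : Matrix (Fin 2) (Fin 2) R) : ![0, 1] ᵥ* g = g.row 1 := by
  ext j
  simp [vecMul, dotProduct]

/-- The symmetric cube of a `2 × 2` matrix: the matrix of the substitution `v ↦ v ᵥ* g` in the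
coordinates of `veronese`, acting on row vectors. -/
def symCube (g : Matrix (Fin 2) (Fin 2) R) : Matrix (Fin 4) (Fin 4) R :=
  Matrix.of ![veronese (g.row 0), polar (g.row 0) (g.row 1), polar (g.row 1) (g.row 0),
    veronese (g.row 1)]

lemma veronese_vecMul_symCube (v : Fin 2 → R) (g : Matrix (Fin 2) (Fin 2) R) :
    veronese v ᵥ* symCube g = veronese (v ᵥ* g) := by
  ext i
  fin_cases i <;>
    simp [veronese, polar, symCube, vecMul, dotProduct, Fin.sum_univ_four] <;> ring

lemma polar_vecMul_symCube (v w : Fin 2 → R) (g : Matrix (Fin 2) (Fin 2) R) :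
    polar v w ᵥ* symCube g = polar (v ᵥ* g) (w ᵥ* g) := by
  ext i
  fin_cases i <;>
    simp [veronese, polar, symCube, vecMul, dotProduct, Fin.sum_univ_four] <;> ring

lemma symCube_one : symCube (1 : Matrix (Fin 2) (Fin 2) R) = 1 := by
  ext i j
  fin_cases i <;> fin_cases j <;> simp [symCube, veronese, polar]

lemma symCube_mul (g h : Matrix (Fin 2) (Fin 2) R) :
    symCube (g * h) = symCube g * symCube h := by
  ext i j
  rw [mul_apply_eq_vecMul]
  fin_cases i
  · exact congrFun (veronese_vecMul_symCube (g.row 0) h).symm j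
  · exact congrFun (polar_vecMul_symCube (g.row 0) (g.row 1) h).symm j
  · exact congrFun (polar_vecMul_symCube (g.row 1) (g.row 0) h).symm j
  · exact congrFun (veronese_vecMul_symCube (g.row 1) h).symm j

/-- The symmetric cube as a homomorphism of general linear groups. -/
def symCubeGL : GL (Fin 2) R →* GL (Fin 4) R :=
  Units.map { toFun := symCube, map_one' := symCube_one, map_mul' := symCube_mul }

lemma coe_symCubeGL (g : GL (Fin 2) R) :
    (symCubeGL g : Matrix (Fin 4) (Fin 4) R) = symCube (g : Matrix (Fin 2) (Fin 2) R) :=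
  rfl

lemma symCube_apply_eq_zero_of_lt {b : Matrix (Fin 2) (Fin 2) R} (hb : b 1 0 = 0)
    {i j : Fin 4} (hji : j < i) : symCube b i j = 0 := by
  fin_cases i <;> fin_cases j <;> simp_all [symCube, veronese, polar]

end SymmetricCube

section Projectivity

variable {F : Type} [Field F]

lemma projAct_mul (A B : GL (Fin 4) F) (W : Submodule F (Fin 4 → F)) :
    projAct F (A * B) W = projAct F B (projAct F A W) := by
  rw [projAct, projAct, projAct, ← Submodule.map_comp]
  congr 1
  exact LinearMap.ext fun v => by simp

lemma projAct_one (W : Submodule F (Fin 4 → F)) : projAct F 1 W = W := by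
  have hone : vecMulLinear (1 : Matrix (Fin 4) (Fin 4) F) = LinearMap.id :=
    LinearMap.ext vecMul_one
  rw [projAct, Units.val_one, hone, Submodule.map_id]

lemma projAct_inv_projAct (A : GL (Fin 4) F) (W : Submodule F (Fin 4 → F)) :
    projAct F A⁻¹ (projAct F A W) = W := by
  rw [← projAct_mul, mul_inv_cancel, projAct_one]

lemma projAct_projAct_inv (A : GL (Fin 4) F) (W : Submodule F (Fin 4 → F)) :
    projAct F A (projAct F A⁻¹ W) = W := by
  rw [← projAct_mul, inv_mul_cancel, projAct_one]

lemma projAct_injective (A : GL (Fin 4) F) : Function.Injective (projAct F A) :=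
  Function.LeftInverse.injective (projAct_inv_projAct A)

lemma projAct_mono (A : GL (Fin 4) F) : Monotone (projAct F A) :=
  fun _ _ => Submodule.map_mono

lemma projAct_span_singleton (A : GL (Fin 4) F) (v : Fin 4 → F) :
    projAct F A (span F {v}) = span F {v ᵥ* (A : Matrix (Fin 4) (Fin 4) F)} := by
  simp [projAct, Submodule.map_span]

lemma projAct_span_pair (A : GL (Fin 4) F) (v w : Fin 4 → F) :
    projAct F A (span F {v, w}) =
      span F {v ᵥ* (A : Matrix (Fin 4) (Fin 4) F), w ᵥ* (A : Matrix (Fin 4) (Fin 4) F)} := by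
  simp [projAct, Submodule.map_span, Set.image_pair]

lemma finrank_projAct (A : GL (Fin 4) F) (W : Submodule F (Fin 4 → F)) :
    Module.finrank F (projAct F A W) = Module.finrank F W :=
  (Submodule.equivMapOfInjective _ (vecMul_injective_of_isUnit A.isUnit) W).finrank_eq.symm

lemma projAct_eq_self_of_le {A : GL (Fin 4) F} {W : Submodule F (Fin 4 → F)}
    (h : projAct F A W ≤ W) : projAct F A W = W :=
  Submodule.eq_of_le_of_finrank_eq h (finrank_projAct A W)

lemma le_projAct_iff {A : GL (Fin 4) F} {U W : Submodule F (Fin 4 → F)} :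
    U ≤ projAct F A W ↔ projAct F A⁻¹ U ≤ W := by
  constructor <;> intro h
  · simpa only [projAct_inv_projAct] using projAct_mono A⁻¹ h
  · simpa only [projAct_projAct_inv] using projAct_mono A h

lemma mem_projAct {A : GL (Fin 4) F} {W : Submodule F (Fin 4 → F)} {v : Fin 4 → F} :
    v ∈ projAct F A W ↔ v ᵥ* ((A⁻¹ : GL (Fin 4) F) : Matrix (Fin 4) (Fin 4) F) ∈ W := by
  rw [← span_singleton_le_iff_mem, ← span_singleton_le_iff_mem, ← projAct_span_singleton,
    le_projAct_iff]

lemma projAct_eq_of_coe_eq_smul {A B : GL (Fin 4) F} {k : F} (hk : k ≠ 0)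
    (h : (A : Matrix (Fin 4) (Fin 4) F) = k • (B : Matrix (Fin 4) (Fin 4) F)) :
    projAct F A = projAct F B := by
  funext W
  have hmap : vecMulLinear (A : Matrix (Fin 4) (Fin 4) F) =
      k • vecMulLinear (B : Matrix (Fin 4) (Fin 4) F) :=
    LinearMap.ext fun v => by simp [h]
  rw [projAct, hmap, Submodule.map_smul _ _ _ hk, projAct]

end Projectivity

section CubicProjectivity

variable {F : Type} [Field F]

/-- The projectivity of `PG(3,q)` induced by `g` through its action on binary cubic forms. -/
def cubicProj (g : GL (Fin 2) F) : Submodule F (Fin 4 → F) → Submodule F (Fin 4 → F) :=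
  projAct F (symCubeGL g)

lemma cubicProj_mul (g h : GL (Fin 2) F) (W : Submodule F (Fin 4 → F)) :
    cubicProj (g * h) W = cubicProj h (cubicProj g W) := by
  rw [cubicProj, map_mul, projAct_mul, cubicProj, cubicProj]

lemma cubicProj_inv_cubicProj (g : GL (Fin 2) F) (W : Submodule F (Fin 4 → F)) :
    cubicProj g⁻¹ (cubicProj g W) = W := by
  rw [cubicProj, map_inv, cubicProj, projAct_inv_projAct]

lemma cubicProj_cubicProj_inv (g : GL (Fin 2) F) (W : Submodule F (Fin 4 → F)) :
    cubicProj g (cubicProj g⁻¹ W) = W := by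
  rw [cubicProj, cubicProj, map_inv, projAct_projAct_inv]

lemma cubicProj_mono (g : GL (Fin 2) F) : Monotone (cubicProj g) :=
  projAct_mono _

lemma le_cubicProj_iff {g : GL (Fin 2) F} {U W : Submodule F (Fin 4 → F)} :
    U ≤ cubicProj g W ↔ cubicProj g⁻¹ U ≤ W := by
  rw [cubicProj, le_projAct_iff, ← map_inv, cubicProj]

lemma mem_cubicProj {g : GL (Fin 2) F} {W : Submodule F (Fin 4 → F)} {v : Fin 4 → F} :
    v ∈ cubicProj g W ↔ v ᵥ* symCube ((g⁻¹ : GL (Fin 2) F) : Matrix (Fin 2) (Fin 2) F) ∈ W := by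
  rw [cubicProj, mem_projAct, ← map_inv, coe_symCubeGL]

lemma cubicProj_span_singleton (g : GL (Fin 2) F) (v : Fin 4 → F) :
    cubicProj g (span F {v}) = span F {v ᵥ* symCube (g : Matrix (Fin 2) (Fin 2) F)} :=
  projAct_span_singleton _ v

lemma cubicProj_span_pair (g : GL (Fin 2) F) (v w : Fin 4 → F) :
    cubicProj g (span F {v, w}) =
      span F {v ᵥ* symCube (g : Matrix (Fin 2) (Fin 2) F),
        w ᵥ* symCube (g : Matrix (Fin 2) (Fin 2) F)} :=
  projAct_span_pair _ v w

/-- A matrix moving the parameter `(0 : 1)` of the projective line to `t` for `some t`, and to `∞`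
for `none`. -/
def chart : Option F → GL (Fin 2) F
  | none => .mkOfDetNeZero !![0, 1; 1, 0] (by simp)
  | some t => .mkOfDetNeZero !![1, 0; t, 1] (by simp)

lemma coe_chart_none :
    (chart (none : Option F) : Matrix (Fin 2) (Fin 2) F) = !![0, 1; 1, 0] :=
  rfl

lemma coe_chart_some (t : F) :
    (chart (some t) : Matrix (Fin 2) (Fin 2) F) = !![1, 0; t, 1] :=
  rfl

lemma coe_inv_chart_none :
    ((chart (none : Option F))⁻¹ : Matrix (Fin 2) (Fin 2) F) = !![0, 1; 1, 0] := by
  rw [coe_chart_none]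
  simp [inv_def]

lemma coe_inv_chart_some (t : F) :
    ((chart (some t))⁻¹ : Matrix (Fin 2) (Fin 2) F) = !![1, 0; -t, 1] := by
  rw [coe_chart_some]
  simp [inv_def]

lemma exists_eq_upper_mul_chart (g : GL (Fin 2) F) :
    ∃ (p : Option F) (b : GL (Fin 2) F), b 1 0 = 0 ∧ g = b * chart p := by
  by_cases h : g 1 1 = 0
  · exact ⟨none, g * (chart none)⁻¹, by simp [mul_apply, coe_inv_chart_none, h], by simp⟩
  · refine ⟨some (g 1 0 / g 1 1), g * (chart (some (g 1 0 / g 1 1)))⁻¹, ?_, by simp⟩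
    have hcancel : g 1 0 + -(g 1 1 * (g 1 0 / g 1 1)) = 0 := by
      rw [mul_div_cancel₀ _ h, add_neg_cancel]
    simpa [mul_apply, coe_inv_chart_some] using hcancel

/-- The osculating flag of the twisted cubic at `P(0)`: `oscFlag F 3` is the point `P(0)`,
`oscFlag F 2` the tangent line and `oscFlag F 1` the osculating plane there. -/
def oscFlag (F : Type) [Field F] (k : Fin 4) : Submodule F (Fin 4 → F) where
  carrier := {v | ∀ i < k, v i = 0}
  add_mem' hv hw i hi := by simp [hv i hi, hw i hi]
  zero_mem' _ _ := rfl
  smul_mem' c v hv i hi := by simp [hv i hi]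

lemma mem_oscFlag {k : Fin 4} {v : Fin 4 → F} : v ∈ oscFlag F k ↔ ∀ i < k, v i = 0 :=
  Iff.rfl

lemma mem_oscFlag_one {v : Fin 4 → F} : v ∈ oscFlag F 1 ↔ v 0 = 0 := by
  simp [mem_oscFlag]

lemma mem_oscFlag_two {v : Fin 4 → F} : v ∈ oscFlag F 2 ↔ v 0 = 0 ∧ v 1 = 0 := by
  simp [mem_oscFlag, Fin.forall_fin_succ]

lemma mem_oscFlag_three {v : Fin 4 → F} :
    v ∈ oscFlag F 3 ↔ v 0 = 0 ∧ v 1 = 0 ∧ v 2 = 0 := by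
  simp [mem_oscFlag, Fin.forall_fin_succ]

lemma cubicProj_oscFlag_of_upper {b : GL (Fin 2) F} (hb : b 1 0 = 0) (k : Fin 4) :
    cubicProj b (oscFlag F k) = oscFlag F k := by
  refine projAct_eq_self_of_le ?_
  rintro _ ⟨v, hv, rfl⟩ j hj
  rw [vecMulLinear_apply, vecMul, dotProduct]
  refine Finset.sum_eq_zero fun i _ => ?_
  rcases lt_or_ge i k with hi | hi
  · rw [hv i hi, zero_mul]
  · rw [coe_symCubeGL, symCube_apply_eq_zero_of_lt hb (hj.trans_le hi), mul_zero]

lemma exists_cubicProj_oscFlag_eq_iff {k : Fin 4} {W : Submodule F (Fin 4 → F)} :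
    (∃ g, cubicProj g (oscFlag F k) = W) ↔
      (∃ t, W = cubicProj (chart (some t)) (oscFlag F k)) ∨
        W = cubicProj (chart none) (oscFlag F k) := by
  constructor
  · rintro ⟨g, rfl⟩
    obtain ⟨p, b, hb, rfl⟩ := exists_eq_upper_mul_chart g
    rw [cubicProj_mul, cubicProj_oscFlag_of_upper hb]
    cases p with
    | none => exact Or.inr rfl
    | some t => exact Or.inl ⟨t, rfl⟩
  · rintro (⟨t, rfl⟩ | rfl)
    exacts [⟨_, rfl⟩, ⟨_, rfl⟩]

lemma oscFlag_three : oscFlag F 3 = span F {veronese ![0, 1]} := by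
  ext v
  simp only [mem_oscFlag, mem_span_singleton]
  constructor
  · intro hv
    refine ⟨v 3, ?_⟩
    ext i
    fin_cases i <;> simp [veronese, hv]
  · rintro ⟨c, rfl⟩ i hi
    fin_cases i <;> simp_all [veronese]

lemma oscFlag_two : oscFlag F 2 = span F {veronese ![0, 1], polar ![0, 1] ![1, 0]} := by
  ext v
  simp only [mem_oscFlag, mem_span_pair]
  constructor
  · intro hv
    refine ⟨v 3, v 2, ?_⟩
    ext i
    fin_cases i <;> simp [veronese, polar, hv]
  · rintro ⟨c, d, rfl⟩ i hi
    fin_cases i <;> simp_all [veronese, polar]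

lemma cubicProj_span_veronese (g : GL (Fin 2) F) (v : Fin 2 → F) :
    cubicProj g (span F {veronese v}) =
      span F {veronese (v ᵥ* (g : Matrix (Fin 2) (Fin 2) F))} := by
  rw [cubicProj_span_singleton, veronese_vecMul_symCube]

lemma cubicProj_oscFlag_three (g : GL (Fin 2) F) :
    cubicProj g (oscFlag F 3) =
      span F {veronese ((g : Matrix (Fin 2) (Fin 2) F).row 1)} := by
  rw [oscFlag_three, cubicProj_span_veronese, zero_one_vecMul]

lemma cubicProj_oscFlag_two (g : GL (Fin 2) F) :
    cubicProj g (oscFlag F 2) =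
      span F {veronese ((g : Matrix (Fin 2) (Fin 2) F).row 1),
        polar ((g : Matrix (Fin 2) (Fin 2) F).row 1)
          ((g : Matrix (Fin 2) (Fin 2) F).row 0)} := by
  rw [oscFlag_two, cubicProj_span_pair, veronese_vecMul_symCube, polar_vecMul_symCube,
    one_zero_vecMul, zero_one_vecMul]

lemma mem_cubicProj_oscFlag_one {g : GL (Fin 2) F} {v : Fin 4 → F} :
    v ∈ cubicProj g (oscFlag F 1) ↔
      (v ᵥ* symCube ((g⁻¹ : GL (Fin 2) F) : Matrix (Fin 2) (Fin 2) F)) 0 = 0 := by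
  rw [mem_cubicProj, mem_oscFlag_one]

lemma mem_twistedCubic_iff {W : Submodule F (Fin 4 → F)} :
    W ∈ twistedCubic F ↔ ∃ g, cubicProj g (oscFlag F 3) = W := by
  rw [exists_cubicProj_oscFlag_eq_iff]
  simp only [cubicProj_oscFlag_three, coe_chart_none, coe_chart_some, twistedCubic]
  constructor
  · rintro ⟨_, ⟨t, rfl⟩ | rfl, rfl⟩
    · exact Or.inl ⟨t, by simp [veronese]⟩
    · exact Or.inr (by simp [veronese])
  · rintro (⟨t, rfl⟩ | rfl)
    · exact ⟨_, Or.inl ⟨t, rfl⟩, by simp [veronese]⟩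
    · exact ⟨_, Or.inr rfl, by simp [veronese]⟩

lemma isTangent_iff {W : Submodule F (Fin 4 → F)} :
    isTangent F W ↔ ∃ g, cubicProj g (oscFlag F 2) = W := by
  rw [exists_cubicProj_oscFlag_eq_iff]
  simp [isTangent, tangentAt, tangentAtInf, cubicProj_oscFlag_two, coe_chart_none,
    coe_chart_some, veronese, polar]

lemma oscPlane_eq (t : F) : oscPlane F t = cubicProj (chart (some t)) (oscFlag F 1) := by
  ext v
  have hform : planeForm F ![1, -(3 * t), 3 * t ^ 2, -(t ^ 3)] v =
      (v ᵥ* symCube ((chart (some t))⁻¹ : GL (Fin 2) F)) 0 := by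
    simp only [planeForm, Fin.isValue, cons_val_zero, one_mul, cons_val_one, neg_mul, cons_val,
      LinearMap.coe_mk, AddHom.coe_mk, vecMul, dotProduct, symCube, veronese, coe_units_inv,
      coe_inv_chart_some, row_apply, of_apply, cons_val', cons_val_fin_one, one_pow, polar,
      mul_one, Fin.sum_univ_four]
    ring
  rw [mem_cubicProj_oscFlag_one, ← hform, oscPlane, planeOf, LinearMap.mem_ker]

lemma oscPlaneInf_eq : oscPlaneInf F = cubicProj (chart none) (oscFlag F 1) := by
  ext v
  simp [mem_cubicProj_oscFlag_one, coe_inv_chart_none, oscPlaneInf, planeOf, planeForm, vecMul,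
    dotProduct, Fin.sum_univ_four, symCube, veronese, polar]

lemma isOscPlane_iff {W : Submodule F (Fin 4 → F)} :
    isOscPlane F W ↔ ∃ g, cubicProj g (oscFlag F 1) = W := by
  simp only [exists_cubicProj_oscFlag_eq_iff, isOscPlane, oscPlane_eq, oscPlaneInf_eq]

lemma exists_cubicProj_eq_cubicProj_iff {g : GL (Fin 2) F} {U W : Submodule F (Fin 4 → F)} :
    (∃ h, cubicProj h U = cubicProj g W) ↔ ∃ h, cubicProj h U = W := by
  constructor
  · rintro ⟨h, hU⟩
    exact ⟨h * g⁻¹, by rw [cubicProj_mul, hU, cubicProj_inv_cubicProj]⟩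
  · rintro ⟨h, rfl⟩
    exact ⟨h * g, cubicProj_mul h g U⟩

lemma cubicProj_mem_twistedCubic {g : GL (Fin 2) F} {P : Submodule F (Fin 4 → F)} :
    cubicProj g P ∈ twistedCubic F ↔ P ∈ twistedCubic F := by
  simp only [mem_twistedCubic_iff, exists_cubicProj_eq_cubicProj_iff]

lemma isTangent_cubicProj {g : GL (Fin 2) F} {W : Submodule F (Fin 4 → F)} :
    isTangent F (cubicProj g W) ↔ isTangent F W := by
  simp only [isTangent_iff, exists_cubicProj_eq_cubicProj_iff]

lemma isOscPlane_cubicProj {g : GL (Fin 2) F} {W : Submodule F (Fin 4 → F)} :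
    isOscPlane F (cubicProj g W) ↔ isOscPlane F W := by
  simp only [isOscPlane_iff, exists_cubicProj_eq_cubicProj_iff]

lemma isUGamma_cubicProj (g : GL (Fin 2) F) {W : Submodule F (Fin 4 → F)}
    (hW : isUGamma F W) : isUGamma F (cubicProj g W) := by
  obtain ⟨⟨hline, P, ⟨hP, hPW⟩, hunique⟩, htangent, π, hπ, hWπ⟩ := hW
  refine ⟨⟨(finrank_projAct _ W).trans hline, cubicProj g P,
    ⟨cubicProj_mem_twistedCubic.2 hP, cubicProj_mono g hPW⟩, ?_⟩,
    mt isTangent_cubicProj.1 htangent, cubicProj g π, isOscPlane_cubicProj.2 hπ,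
    cubicProj_mono g hWπ⟩
  rintro Q ⟨hQ, hQW⟩
  rw [← cubicProj_cubicProj_inv g Q]
  refine congrArg _ (hunique _ ⟨cubicProj_mem_twistedCubic.2 hQ, ?_⟩)
  exact le_cubicProj_iff.1 hQW

end CubicProjectivity

section UGammaLines

variable {F : Type} [Field F]

lemma oscFlag_antitone : Antitone (oscFlag F) :=
  fun _ _ hkl _ hv i hi => hv i (hi.trans_le hkl)

lemma apply_one_zero_eq_zero_of_cubicProj_le {g : GL (Fin 2) F}
    (h : cubicProj g (oscFlag F 3) ≤ oscFlag F 1) : g 1 0 = 0 := by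
  rw [cubicProj_oscFlag_three, span_singleton_le_iff_mem] at h
  simpa [veronese] using mem_oscFlag_one.1 h

lemma cubicProj_oscFlag_of_le {g : GL (Fin 2) F}
    (h : cubicProj g (oscFlag F 3) ≤ oscFlag F 1) (k : Fin 4) :
    cubicProj g (oscFlag F k) = oscFlag F k :=
  cubicProj_oscFlag_of_upper (apply_one_zero_eq_zero_of_cubicProj_le h) k

/-- The lines through `P(0)` in the osculating plane at `P(0)`, other than the tangent. -/
def pencilLine (a : F) : Submodule F (Fin 4 → F) :=
  span F {![0, 0, 0, 1], ![0, 1, a, 0]}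

lemma mem_pencilLine {a : F} {v : Fin 4 → F} :
    v ∈ pencilLine a ↔ v 0 = 0 ∧ v 2 = a * v 1 := by
  rw [pencilLine, mem_span_pair]
  constructor
  · rintro ⟨c, d, rfl⟩
    simp [mul_comm]
  · rintro ⟨h0, h2⟩
    refine ⟨v 3, v 1, ?_⟩
    ext i
    fin_cases i <;> simp [h0, h2, mul_comm]

lemma finrank_pencilLine (a : F) : Module.finrank F (pencilLine a) = 2 := by
  have hind : LinearIndependent F ![![0, 0, 0, 1], ![0, 1, a, 0]] :=
    LinearIndependent.pair_iff.2 fun c d h =>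
      ⟨by simpa using congrFun h 3, by simpa using congrFun h 1⟩
  rw [pencilLine, ← range_cons_cons_empty _ _ ![], finrank_span_eq_card hind, Fintype.card_fin]

lemma pencilLine_injective : Function.Injective (pencilLine : F → _) := by
  intro a b hab
  have hmem : ![0, 1, a, 0] ∈ pencilLine b := hab ▸ mem_pencilLine.2 (by simp)
  simpa using (mem_pencilLine.1 hmem).2

lemma pencilLine_le_oscFlag_one (a : F) : pencilLine a ≤ oscFlag F 1 :=
  fun _ hv => mem_oscFlag_one.2 (mem_pencilLine.1 hv).1

lemma oscFlag_three_le_pencilLine (a : F) : oscFlag F 3 ≤ pencilLine a := by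
  intro v hv
  obtain ⟨h0, h1, h2⟩ := mem_oscFlag_three.1 hv
  simp [mem_pencilLine, h0, h1, h2]

lemma pencilLine_not_le_oscFlag_two (a : F) : ¬ pencilLine a ≤ oscFlag F 2 := by
  intro h
  have hmem : ![0, 1, a, 0] ∈ oscFlag F 2 := h (mem_pencilLine.2 (by simp))
  simpa using (mem_oscFlag_two.1 hmem).2

lemma oscFlag_three_mem_twistedCubic : oscFlag F 3 ∈ twistedCubic F :=
  mem_twistedCubic_iff.2 ⟨1, cubicProj_oscFlag_of_upper (by simp) 3⟩

lemma isUGamma_pencilLine (a : F) : isUGamma F (pencilLine a) := by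
  refine ⟨⟨finrank_pencilLine a, oscFlag F 3,
    ⟨oscFlag_three_mem_twistedCubic, oscFlag_three_le_pencilLine a⟩, ?_⟩, ?_,
    oscFlag F 1, isOscPlane_iff.2 ⟨1, cubicProj_oscFlag_of_upper (by simp) 1⟩,
    pencilLine_le_oscFlag_one a⟩
  · rintro P ⟨hP, hle⟩
    obtain ⟨g, rfl⟩ := mem_twistedCubic_iff.1 hP
    exact cubicProj_oscFlag_of_le (hle.trans (pencilLine_le_oscFlag_one a)) 3
  · intro htangent
    obtain ⟨g, hg⟩ := isTangent_iff.1 htangent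
    have hpoint : cubicProj g (oscFlag F 3) ≤ oscFlag F 1 :=
      (cubicProj_mono g (oscFlag_antitone (by decide))).trans
        (hg.trans_le (pencilLine_le_oscFlag_one a))
    exact pencilLine_not_le_oscFlag_two a (hg.symm.trans (cubicProj_oscFlag_of_le hpoint 2)).le

lemma finrank_oscFlag_two : Module.finrank F (oscFlag F 2) = 2 := by
  have hind : LinearIndependent F ![veronese ![0, 1], polar ![0, 1] ![(1 : F), 0]] :=
    LinearIndependent.pair_iff.2 fun c d h =>
      ⟨by simpa [veronese, polar] using congrFun h 3,
        by simpa [veronese, polar] using congrFun h 2⟩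
  rw [oscFlag_two, ← range_cons_cons_empty _ _ ![], finrank_span_eq_card hind, Fintype.card_fin]

lemma pencilLine_le {W : Submodule F (Fin 4 → F)} (hpoint : oscFlag F 3 ≤ W) {v : Fin 4 → F}
    (hvW : v ∈ W) (hv0 : v 0 = 0) (hv1 : v 1 ≠ 0) : pencilLine (v 2 / v 1) ≤ W := by
  intro u hu
  obtain ⟨hu0, hu2⟩ := mem_pencilLine.1 hu
  have hdiff : u - (u 1 / v 1) • v ∈ oscFlag F 3 := by
    simp only [mem_oscFlag_three, Pi.sub_apply, Pi.smul_apply, smul_eq_mul, hu0, hv0, hu2]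
    refine ⟨by ring, ?_, by ring⟩
    rw [div_mul_cancel₀ _ hv1, sub_self]
  exact (sub_mem_iff_left W (smul_mem W _ hvW)).1 (hpoint hdiff)

lemma exists_eq_pencilLine {W : Submodule F (Fin 4 → F)} (hline : isLine F W)
    (hpoint : oscFlag F 3 ≤ W) (hplane : W ≤ oscFlag F 1) (htangent : W ≠ oscFlag F 2) :
    ∃ a, W = pencilLine a := by
  have hzero {v : Fin 4 → F} (hv : v ∈ W) : v 0 = 0 := mem_oscFlag_one.1 (hplane hv)
  have hnotle : ¬ W ≤ oscFlag F 2 := fun hle =>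
    htangent (eq_of_le_of_finrank_eq hle (hline.trans finrank_oscFlag_two.symm))
  obtain ⟨v, hvW, hv⟩ := SetLike.not_le_iff_exists.1 hnotle
  have hv1 : v 1 ≠ 0 := fun h => hv (mem_oscFlag_two.2 ⟨hzero hvW, h⟩)
  exact ⟨v 2 / v 1, (eq_of_le_of_finrank_eq (pencilLine_le hpoint hvW (hzero hvW) hv1)
    ((finrank_pencilLine _).trans hline.symm)).symm⟩

lemma exists_eq_pencilLine_of_isUGamma {W : Submodule F (Fin 4 → F)} (hW : isUGamma F W)
    (hpoint : oscFlag F 3 ≤ W) : ∃ a, W = pencilLine a := by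
  obtain ⟨⟨hline, -⟩, htangent, π, hπ, hWπ⟩ := hW
  obtain ⟨g, rfl⟩ := isOscPlane_iff.1 hπ
  have hplane : cubicProj g (oscFlag F 1) = oscFlag F 1 := by
    have hinv := cubicProj_oscFlag_of_le (le_cubicProj_iff.1 (hpoint.trans hWπ)) 1
    rw [← hinv, cubicProj_cubicProj_inv, hinv]
  refine exists_eq_pencilLine hline hpoint (hplane ▸ hWπ) ?_
  rintro rfl
  exact htangent (isTangent_iff.2 ⟨1, cubicProj_oscFlag_of_upper (by simp) 2⟩)

/-- The UΓ-line in the osculating plane at the point with parameter `p.1` and with slope `p.2` in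
the pencil of lines of that plane through that point. -/
def uGammaLine (p : Option F × F) : Submodule F (Fin 4 → F) :=
  cubicProj (chart p.1) (pencilLine p.2)

lemma isUGamma_uGammaLine (p : Option F × F) : isUGamma F (uGammaLine p) :=
  isUGamma_cubicProj _ (isUGamma_pencilLine _)

lemma range_uGammaLine : Set.range uGammaLine = {W | isUGamma F W} := by
  refine Set.Subset.antisymm (Set.range_subset_iff.2 isUGamma_uGammaLine) fun W hW => ?_
  obtain ⟨P, ⟨hP, hPW⟩, -⟩ := hW.1.2
  obtain ⟨g, rfl⟩ := mem_twistedCubic_iff.1 hP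
  obtain ⟨p, b, hb, rfl⟩ := exists_eq_upper_mul_chart g
  rw [cubicProj_mul, cubicProj_oscFlag_of_upper hb] at hPW
  obtain ⟨a, ha⟩ := exists_eq_pencilLine_of_isUGamma (isUGamma_cubicProj (chart p)⁻¹ hW)
    (le_cubicProj_iff.2 (by rwa [inv_inv]))
  exact ⟨(p, a), by rw [uGammaLine, ← ha, cubicProj_cubicProj_inv]⟩

lemma eq_of_cubicProj_chart_oscFlag_three_eq {p p' : Option F}
    (h : cubicProj (chart p) (oscFlag F 3) = cubicProj (chart p') (oscFlag F 3)) : p = p' := by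
  rw [cubicProj_oscFlag_three, cubicProj_oscFlag_three] at h
  obtain ⟨c, hc⟩ := mem_span_singleton.1 (h ▸ mem_span_singleton_self _)
  cases p <;> cases p' <;> simp [veronese, coe_chart_none, coe_chart_some] at hc ⊢ <;> grind

lemma uGammaLine_injective : Function.Injective (uGammaLine : Option F × F → _) := by
  rintro ⟨p, a⟩ ⟨p', a'⟩ h
  have hpoint (r : Option F × F) : cubicProj (chart r.1) (oscFlag F 3) ∈ twistedCubic F ∧
      cubicProj (chart r.1) (oscFlag F 3) ≤ uGammaLine r :=
    ⟨mem_twistedCubic_iff.2 ⟨_, rfl⟩, cubicProj_mono _ (oscFlag_three_le_pencilLine _)⟩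
  obtain rfl : p = p' := eq_of_cubicProj_chart_oscFlag_three_eq
    ((isUGamma_uGammaLine (p, a)).1.2.unique (hpoint (p, a)) (h ▸ hpoint (p', a')))
  exact congrArg (Prod.mk p) (pencilLine_injective (projAct_injective _ h))

theorem encard_setOf_isUGamma :
    {W | isUGamma F W}.encard = ENat.card F ^ 2 + ENat.card F := by
  rw [← range_uGammaLine, ← Set.image_univ, uGammaLine_injective.encard_image, Set.encard_univ,
    ENat.card_prod, ENat.card_congr (Equiv.optionEquivSumPUnit.{0} F), ENat.card_sum,
    ENat.card_eq_coe_fintype_card (α := PUnit), Fintype.card_punit, Nat.cast_one, add_mul,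
    one_mul, sq]

end UGammaLines

section PolynomialFunctions

variable {R : Type*} [CommRing R] [IsDomain R]

lemma eq_zero_of_forall_sum_mul_pow_eq_zero {n : ℕ} (hR : n ≤ ENat.card R) {a : Fin n → R}
    (h : ∀ t, ∑ i, a i * t ^ (i : ℕ) = 0) : a = 0 := by
  obtain ⟨f⟩ : Nonempty (Fin n ↪ R) := by
    rwa [ENat.card, Cardinal.natCast_le_toENat, ← Cardinal.lift_mk_fin,
      ← Cardinal.lift_id'.{0} (Cardinal.mk R), Cardinal.lift_mk_le'] at hR
  exact eq_zero_of_forall_index_sum_mul_pow_eq_zero f.injective fun j => h (f j)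

lemma monomial_of_mul_eq_cube (hR : 4 ≤ ENat.card R) {a a' a'' b c : R} (hc : c ≠ 0)
    (h : ∀ t, (a * t ^ 3 + a' * t ^ 2 + a'' * t) * c = b * t ^ 3) :
    a'' = 0 ∧ a' = 0 ∧ a * c = b := by
  have hcoeff := eq_zero_of_forall_sum_mul_pow_eq_zero hR
    (a := ![0, a'' * c, a' * c, a * c - b]) fun t => by
    simp only [Fin.sum_univ_four, Fin.isValue, cons_val_zero, Fin.coe_ofNat_eq_mod, Nat.zero_mod,
      pow_zero, mul_one, cons_val_one, Nat.one_mod, pow_one, zero_add, cons_val, Nat.reduceMod,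
      Nat.mod_succ]
    linear_combination h t
  exact ⟨by simpa [hc] using congrFun hcoeff 1, by simpa [hc] using congrFun hcoeff 2,
    sub_eq_zero.1 (congrFun hcoeff 3)⟩

end PolynomialFunctions

section Automorphisms

variable {F : Type} [Field F]

lemma monomial_of_mul_eq_sq (hF : 5 ≤ ENat.card F) {a a' b b' c c' c'' : F}
    (h : ∀ t, (a * t ^ 2 + a' * t) * (c * t ^ 2 + c' * t + c'') = (b * t ^ 2 + b' * t) ^ 2)
    (hc : ∀ t, c * t ^ 2 + c' * t + c'' ≠ 0) (hb : b + b' ≠ 0) :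
    a' = 0 ∧ b = 0 ∧ c = 0 ∧ c' = 0 ∧ a * c'' = b' ^ 2 := by
  have hcoeff := eq_zero_of_forall_sum_mul_pow_eq_zero hF
    (a := ![0, a' * c'', a * c'' + a' * c' - b' ^ 2, a * c' + a' * c - 2 * b * b',
      a * c - b ^ 2]) fun t => by
    simp only [Fin.sum_univ_five, Fin.isValue, cons_val_zero, Fin.coe_ofNat_eq_mod, Nat.zero_mod,
      pow_zero, mul_one, cons_val_one, Nat.one_mod, pow_one, zero_add, cons_val, Nat.reduceMod,
      Nat.mod_succ]
    linear_combination h t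
  have h1 : a' * c'' = 0 := congrFun hcoeff 1
  have h2 : a * c'' + a' * c' - b' ^ 2 = 0 := congrFun hcoeff 2
  have h3 : a * c' + a' * c - 2 * b * b' = 0 := congrFun hcoeff 3
  have h4 : a * c - b ^ 2 = 0 := congrFun hcoeff 4
  have hc'' : c'' ≠ 0 := by simpa using hc 0
  obtain rfl : a' = 0 := by simpa [hc''] using h1
  have hsq (t : F) : a * (c * t ^ 2 + c' * t + c'') = (b * t + b') ^ 2 := by
    linear_combination t ^ 2 * h4 + t * h3 + h2
  have ha : a ≠ 0 := by
    rintro rfl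
    exact pow_ne_zero 2 hb (by simpa using (hsq 1).symm)
  have hb0 : b = 0 := by
    by_contra hne
    -- then the right-hand side of `hsq` has a root, while the left-hand side has none
    refine mul_ne_zero ha (hc (-b' / b)) ?_
    rw [hsq]
    field_simp
    ring
  subst hb0
  refine ⟨rfl, rfl, ?_, ?_, ?_⟩
  · simpa [ha] using h4
  · simpa [ha] using h3
  · linear_combination h2

lemma quadrics_of_mem_twistedCubic {P : Submodule F (Fin 4 → F)} (hP : P ∈ twistedCubic F)
    {v : Fin 4 → F} (hv : v ∈ P) :
    v 0 * v 2 = v 1 ^ 2 ∧ v 0 * v 3 = v 1 * v 2 ∧ v 1 * v 3 = v 2 ^ 2 := by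
  obtain ⟨g, rfl⟩ := mem_twistedCubic_iff.1 hP
  rw [cubicProj_oscFlag_three] at hv
  obtain ⟨c, rfl⟩ := mem_span_singleton.1 hv
  refine ⟨?_, ?_, ?_⟩ <;> simp [veronese] <;> ring

lemma mem_span_veronese_one_zero {v : Fin 4 → F} :
    v ∈ span F {veronese ![1, 0]} ↔ v 1 = 0 ∧ v 2 = 0 ∧ v 3 = 0 := by
  rw [mem_span_singleton]
  constructor
  · rintro ⟨c, rfl⟩
    simp [veronese]
  · rintro ⟨h1, h2, h3⟩
    refine ⟨v 0, ?_⟩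
    ext i
    fin_cases i <;> simp [veronese, h1, h2, h3]

lemma mem_span_veronese_one_zero_of_apply_three {P : Submodule F (Fin 4 → F)}
    (hP : P ∈ twistedCubic F) {v : Fin 4 → F} (hv : v ∈ P) (h3 : v 3 = 0) :
    v ∈ span F {veronese ![1, 0]} := by
  obtain ⟨h02, -, h13⟩ := quadrics_of_mem_twistedCubic hP hv
  have h2 : v 2 = 0 := by simpa [h3] using h13.symm
  have h1 : v 1 = 0 := by simpa [h2] using h02.symm
  exact mem_span_veronese_one_zero.2 ⟨h1, h2, h3⟩

lemma mem_oscFlag_three_of_apply_two {P : Submodule F (Fin 4 → F)} (hP : P ∈ twistedCubic F)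
    {v : Fin 4 → F} (hv : v ∈ P) (h2 : v 2 = 0) (h3 : v 3 ≠ 0) : v ∈ oscFlag F 3 := by
  obtain ⟨h02, h03, -⟩ := quadrics_of_mem_twistedCubic hP hv
  have h1 : v 1 = 0 := by simpa [h2] using h02.symm
  have h0 : v 0 = 0 := by simpa [h1, h3] using h03
  exact mem_oscFlag_three.2 ⟨h0, h1, h2⟩

lemma vecMul_mem_projAct {A : GL (Fin 4) F} {W : Submodule F (Fin 4 → F)} {v : Fin 4 → F} :
    v ᵥ* (A : Matrix (Fin 4) (Fin 4) F) ∈ projAct F A W ↔ v ∈ W :=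
  (vecMul_injective_of_isUnit A.isUnit).mem_set_image

lemma span_veronese_mem_twistedCubic (t : F) :
    span F {veronese ![t, 1]} ∈ twistedCubic F :=
  ⟨_, Or.inl ⟨t, rfl⟩, by simp [veronese]⟩

lemma span_veronese_one_zero_mem_twistedCubic :
    span F {veronese ![1, 0]} ∈ twistedCubic F :=
  ⟨_, Or.inr rfl, by simp [veronese]⟩

/-- The diagonal matrix `diag(1, d)`, which scales the parameter of the twisted cubic. -/
def torus (d : Fˣ) : GL (Fin 2) F :=
  .mkOfDetNeZero !![1, 0; 0, (d : F)] (by simp)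

lemma symCube_torus (d : Fˣ) : symCube (torus d : Matrix (Fin 2) (Fin 2) F) =
    !![1, 0, 0, 0; 0, (d : F), 0, 0; 0, 0, (d : F) ^ 2, 0; 0, 0, 0, (d : F) ^ 3] := by
  ext i j
  fin_cases i <;> fin_cases j <;> simp [symCube, veronese, polar, torus]

lemma diagonal_eq_smul_symCube_torus {x : Fin 4 → F} (h2 : x 2 ≠ 0) (h3 : x 3 ≠ 0)
    (h03 : x 0 * x 3 = x 1 * x 2) (h13 : x 1 * x 3 = x 2 ^ 2) :
    diagonal x = x 0 •
      symCube (torus (Units.mk0 (x 3 / x 2) (div_ne_zero h3 h2)) : Matrix (Fin 2) (Fin 2) F) := by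
  have h1 : x 1 = x 0 * (x 3 / x 2) := by
    rw [← mul_div_assoc, h03, mul_div_cancel_right₀ _ h2]
  have h2' : x 2 = x 0 * (x 3 / x 2) ^ 2 := by
    rw [sq, ← mul_assoc, ← h1, ← mul_div_assoc, h13, sq, mul_div_cancel_right₀ _ h2]
  have h3' : x 3 = x 0 * (x 3 / x 2) ^ 3 := by
    rw [pow_succ, ← mul_assoc, ← h2', mul_div_cancel₀ _ h2]
  rw [symCube_torus]
  ext i j
  fin_cases i <;> fin_cases j <;> simp [← h1, ← h2', ← h3']

lemma exists_projAct_eq_torus_of_diagonal {A : GL (Fin 4) F} {x : Fin 4 → F}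
    (hA : (A : Matrix (Fin 4) (Fin 4) F) = diagonal x) (h03 : x 0 * x 3 = x 1 * x 2)
    (h13 : x 1 * x 3 = x 2 ^ 2) : ∃ d : Fˣ, projAct F A = cubicProj (torus d) := by
  have hx (i : Fin 4) : x i ≠ 0 := by
    have hdet := A.det_ne_zero
    rw [hA, det_diagonal] at hdet
    exact Finset.prod_ne_zero_iff.1 hdet i (Finset.mem_univ i)
  exact ⟨_, projAct_eq_of_coe_eq_smul (hx 0)
    (hA.trans (diagonal_eq_smul_symCube_torus (hx 2) (hx 3) h03 h13))⟩

lemma veronese_vecMul_apply (N : Matrix (Fin 4) (Fin 4) F) (t : F) (i : Fin 4) :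
    (veronese ![t, 1] ᵥ* N) i = N 0 i * t ^ 3 + N 1 i * t ^ 2 + N 2 i * t + N 3 i := by
  simp only [vecMul, dotProduct, veronese, Fin.isValue, cons_val_zero, cons_val_one,
    cons_val_fin_one, mul_one, one_pow, Fin.sum_univ_four, cons_val, one_mul, add_left_inj]
  ring

section FixingZeroInfinity

variable {A : GL (Fin 4) F}

lemma row_three_of_projAct_eq (hzero : projAct F A (oscFlag F 3) = oscFlag F 3) :
    A 3 0 = 0 ∧ A 3 1 = 0 ∧ A 3 2 = 0 := by
  have hmem : ![0, 0, 0, 1] ᵥ* (A : Matrix (Fin 4) (Fin 4) F) ∈ oscFlag F 3 :=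
    hzero ▸ vecMul_mem_projAct.2 (mem_oscFlag_three.2 (by simp))
  simpa [mem_oscFlag_three, vecMul, dotProduct, Fin.sum_univ_four] using hmem

lemma row_zero_of_projAct_eq
    (hinf : projAct F A (span F {veronese ![1, 0]}) = span F {veronese ![1, 0]}) :
    A 0 1 = 0 ∧ A 0 2 = 0 ∧ A 0 3 = 0 := by
  have hmem : ![1, 0, 0, 0] ᵥ* (A : Matrix (Fin 4) (Fin 4) F) ∈ span F {veronese ![1, 0]} :=
    hinf ▸ vecMul_mem_projAct.2 (mem_span_veronese_one_zero.2 (by simp))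
  simpa [mem_span_veronese_one_zero, vecMul, dotProduct, Fin.sum_univ_four] using hmem

lemma vecMul_apply_three_ne_zero
    (hcubic : ∀ P ∈ twistedCubic F, projAct F A P ∈ twistedCubic F)
    (hinf : projAct F A (span F {veronese ![1, 0]}) = span F {veronese ![1, 0]}) (t : F) :
    (veronese ![t, 1] ᵥ* (A : Matrix (Fin 4) (Fin 4) F)) 3 ≠ 0 := by
  intro h3
  have hmem := mem_span_veronese_one_zero_of_apply_three
    (hcubic _ (span_veronese_mem_twistedCubic t))
    (vecMul_mem_projAct.2 (mem_span_singleton_self _)) h3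
  rw [← hinf, vecMul_mem_projAct, mem_span_veronese_one_zero] at hmem
  simp [veronese] at hmem

lemma vecMul_apply_two_ne_zero
    (hcubic : ∀ P ∈ twistedCubic F, projAct F A P ∈ twistedCubic F)
    (hzero : projAct F A (oscFlag F 3) = oscFlag F 3)
    (hinf : projAct F A (span F {veronese ![1, 0]}) = span F {veronese ![1, 0]})
    {t : F} (ht : t ≠ 0) : (veronese ![t, 1] ᵥ* (A : Matrix (Fin 4) (Fin 4) F)) 2 ≠ 0 := by
  intro h2
  have hmem := mem_oscFlag_three_of_apply_two (hcubic _ (span_veronese_mem_twistedCubic t))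
    (vecMul_mem_projAct.2 (mem_span_singleton_self _)) h2
    (vecMul_apply_three_ne_zero hcubic hinf t)
  rw [← hzero, vecMul_mem_projAct, mem_oscFlag_three] at hmem
  simp [veronese, ht] at hmem

lemma coe_eq_diagonal_of_fixes_zero_inf (hF : 5 ≤ ENat.card F)
    (hcubic : ∀ P ∈ twistedCubic F, projAct F A P ∈ twistedCubic F)
    (hzero : projAct F A (oscFlag F 3) = oscFlag F 3)
    (hinf : projAct F A (span F {veronese ![1, 0]}) = span F {veronese ![1, 0]}) :
    (A : Matrix (Fin 4) (Fin 4) F) = diagonal ![A 0 0, A 1 1, A 2 2, A 3 3] ∧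
      A 0 0 * A 3 3 = A 1 1 * A 2 2 ∧ A 1 1 * A 3 3 = A 2 2 ^ 2 := by
  obtain ⟨h30, h31, h32⟩ := row_three_of_projAct_eq hzero
  obtain ⟨h01, h02, h03⟩ := row_zero_of_projAct_eq hinf
  have hquadrics (t : F) := quadrics_of_mem_twistedCubic
    (hcubic _ (span_veronese_mem_twistedCubic t))
    (vecMul_mem_projAct.2 (mem_span_singleton_self _))
  have hthree := vecMul_apply_three_ne_zero hcubic hinf
  have htwo := vecMul_apply_two_ne_zero hcubic hzero hinf one_ne_zero
  simp only [veronese_vecMul_apply, h30, h31, h32, h01, h02, h03, zero_mul, zero_add, add_zero,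
    one_pow, mul_one] at hquadrics hthree htwo
  obtain ⟨h21, h12, h13, h23, h1133⟩ :=
    monomial_of_mul_eq_sq hF (fun t => (hquadrics t).2.2) hthree htwo
  simp only [h21, h12, h13, h23, zero_mul, zero_add, add_zero] at hquadrics hthree
  obtain ⟨h20, h10, h0033⟩ := monomial_of_mul_eq_cube (a := A 0 0) (a' := A 1 0)
    (a'' := A 2 0) (b := A 1 1 * A 2 2) (c := A 3 3) (le_trans (by norm_num) hF) (hthree 0)
    fun t => by linear_combination (hquadrics t).2.1
  refine ⟨?_, h0033, h1133⟩
  ext i j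
  fin_cases i <;> fin_cases j <;> simp [*]

lemma exists_projAct_eq_torus (hF : 5 ≤ ENat.card F)
    (hcubic : ∀ P ∈ twistedCubic F, projAct F A P ∈ twistedCubic F)
    (hzero : projAct F A (oscFlag F 3) = oscFlag F 3)
    (hinf : projAct F A (span F {veronese ![1, 0]}) = span F {veronese ![1, 0]}) :
    ∃ d : Fˣ, projAct F A = cubicProj (torus d) := by
  obtain ⟨hdiag, h03, h13⟩ := coe_eq_diagonal_of_fixes_zero_inf hF hcubic hzero hinf
  exact exists_projAct_eq_torus_of_diagonal hdiag h03 h13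

end FixingZeroInfinity

lemma exists_cubicProj_eq_of_ne {P Q : Submodule F (Fin 4 → F)} (hP : P ∈ twistedCubic F)
    (hQ : Q ∈ twistedCubic F) (hPQ : P ≠ Q) :
    ∃ g, cubicProj g (oscFlag F 3) = P ∧ cubicProj g (span F {veronese ![1, 0]}) = Q := by
  obtain ⟨h, rfl⟩ := mem_twistedCubic_iff.1 hP
  obtain ⟨k, rfl⟩ := mem_twistedCubic_iff.1 hQ
  rw [cubicProj_oscFlag_three, cubicProj_oscFlag_three] at *
  set v := (h : Matrix (Fin 2) (Fin 2) F).row 1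
  set w := (k : Matrix (Fin 2) (Fin 2) F).row 1
  have hv : v ≠ 0 := (linearIndependent_rows_of_isUnit h.isUnit).ne_zero 1
  have hw : w ≠ 0 := (linearIndependent_rows_of_isUnit k.isUnit).ne_zero 1
  have hind : LinearIndependent F (Matrix.of ![w, v]).row := by
    refine (LinearIndependent.pair_iff' hw).2 fun c hc => hPQ ?_
    have hc0 : c ≠ 0 := by
      rintro rfl
      exact hv (by rw [← hc, zero_smul])
    rw [← hc, veronese_smul, span_singleton_smul_eq (pow_ne_zero 3 hc0).isUnit]
  obtain ⟨g, hg⟩ := linearIndependent_rows_iff_isUnit.1 hind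
  refine ⟨g, ?_, ?_⟩
  · rw [cubicProj_oscFlag_three, hg]
    rfl
  · rw [cubicProj_span_veronese, one_zero_vecMul, hg]
    rfl

lemma cubicProj_mem_Gq (g : GL (Fin 2) F) : cubicProj g ∈ Gq F := by
  refine ⟨⟨symCubeGL g, rfl⟩, Set.Subset.antisymm ?_ fun P hP => ?_⟩
  · rintro _ ⟨P, hP, rfl⟩
    exact cubicProj_mem_twistedCubic.2 hP
  · exact ⟨cubicProj g⁻¹ P, cubicProj_mem_twistedCubic.2 hP, cubicProj_cubicProj_inv g P⟩

theorem Gq_eq_range_cubicProj (hF : 5 ≤ ENat.card F) : Gq F = Set.range cubicProj := by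
  refine Set.Subset.antisymm ?_ (Set.range_subset_iff.2 cubicProj_mem_Gq)
  rintro _ ⟨⟨A, rfl⟩, hA⟩
  have hcubic (P) (hP : P ∈ twistedCubic F) : projAct F A P ∈ twistedCubic F :=
    hA ▸ Set.mem_image_of_mem _ hP
  have hne : oscFlag F 3 ≠ span F {veronese ![1, 0]} := fun h => by
    have hmem : veronese ![1, 0] ∈ oscFlag F 3 := h ▸ mem_span_singleton_self _
    simp [mem_oscFlag_three, veronese] at hmem
  obtain ⟨g, hgzero, hginf⟩ := exists_cubicProj_eq_of_ne
    (hcubic _ oscFlag_three_mem_twistedCubic) (hcubic _ span_veronese_one_zero_mem_twistedCubic)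
    ((projAct_injective A).ne hne)
  have hmul (W) : projAct F (A * symCubeGL g⁻¹) W = cubicProj g⁻¹ (projAct F A W) :=
    projAct_mul _ _ W
  obtain ⟨d, hd⟩ := exists_projAct_eq_torus (A := A * symCubeGL g⁻¹) hF
    (fun P hP => by rw [hmul, cubicProj_mem_twistedCubic]; exact hcubic P hP)
    (by rw [hmul, ← hgzero, cubicProj_inv_cubicProj])
    (by rw [hmul, ← hginf, cubicProj_inv_cubicProj])
  refine ⟨torus d * g, funext fun W => ?_⟩
  rw [cubicProj_mul, ← hd, hmul, cubicProj_cubicProj_inv]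

end Automorphisms

section Stabilizer

variable {F : Type} [Field F]

lemma cubicProj_upperRightHom_pencilLine_zero (c : F) :
    cubicProj (GeneralLinearGroup.upperRightHom c) (pencilLine 0) = pencilLine (2 * c) := by
  refine eq_of_le_of_finrank_eq ?_ ((finrank_projAct _ _).trans (by simp [finrank_pencilLine]))
  rw [pencilLine, cubicProj_span_pair, span_le, Set.pair_subset_iff]
  simp [mem_pencilLine, GeneralLinearGroup.upperRightHom, symCube, veronese, polar]

lemma cubicProj_torus_pencilLine_zero (d : Fˣ) :
    cubicProj (torus d) (pencilLine 0) = pencilLine 0 := by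
  refine projAct_eq_self_of_le ?_
  rw [pencilLine, projAct_span_pair, span_le, Set.pair_subset_iff, ← pencilLine]
  simp [mem_pencilLine, coe_symCubeGL, symCube_torus]

lemma off_diagonal_eq_zero_of_cubicProj_pencilLine_zero (h2 : (2 : F) ≠ 0) {g : GL (Fin 2) F}
    (hg : cubicProj g (pencilLine 0) = pencilLine 0) : g 0 1 = 0 ∧ g 1 0 = 0 := by
  have h10 : g 1 0 = 0 := apply_one_zero_eq_zero_of_cubicProj_le
    (((cubicProj_mono g (oscFlag_three_le_pencilLine 0)).trans hg.le).trans
      (pencilLine_le_oscFlag_one 0))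
  have hdet : g 0 0 ≠ 0 ∧ g 1 1 ≠ 0 := by
    simpa [det_fin_two, h10] using g.det_ne_zero
  have hmem : ![0, 1, 0, 0] ᵥ* symCube (g : Matrix (Fin 2) (Fin 2) F) ∈ pencilLine 0 :=
    hg ▸ vecMul_mem_projAct.2 (mem_pencilLine.2 (by simp))
  refine ⟨?_, h10⟩
  simpa [symCube, veronese, polar, h10, h2, hdet] using (mem_pencilLine.1 hmem).2

lemma exists_cubicProj_eq_torus {g : GL (Fin 2) F} (h01 : g 0 1 = 0) (h10 : g 1 0 = 0) :
    ∃ d : Fˣ, cubicProj g = cubicProj (torus d) := by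
  refine exists_projAct_eq_torus_of_diagonal
    (x := ![g 0 0 ^ 3, g 0 0 ^ 2 * g 1 1, g 0 0 * g 1 1 ^ 2, g 1 1 ^ 3]) ?_ ?_ ?_
  · rw [coe_symCubeGL]
    ext i j
    fin_cases i <;> fin_cases j <;> simp [symCube, veronese, polar, h01, h10, mul_comm]
  · change g 0 0 ^ 3 * g 1 1 ^ 3 = g 0 0 ^ 2 * g 1 1 * (g 0 0 * g 1 1 ^ 2)
    ring
  · change g 0 0 ^ 2 * g 1 1 * g 1 1 ^ 3 = (g 0 0 * g 1 1 ^ 2) ^ 2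
    ring

theorem lineStab_pencilLine_zero (hF : 5 ≤ ENat.card F) (h2 : (2 : F) ≠ 0) :
    lineStab F (pencilLine 0) = Set.range fun d : Fˣ => cubicProj (torus d) := by
  ext f
  rw [lineStab, Gq_eq_range_cubicProj hF]
  constructor
  · rintro ⟨⟨g, rfl⟩, hg⟩
    obtain ⟨h01, h10⟩ := off_diagonal_eq_zero_of_cubicProj_pencilLine_zero h2 hg
    obtain ⟨d, hd⟩ := exists_cubicProj_eq_torus h01 h10
    exact ⟨d, hd.symm⟩
  · rintro ⟨d, rfl⟩
    exact ⟨⟨torus d, rfl⟩, cubicProj_torus_pencilLine_zero d⟩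

lemma cubicProj_torus_injective :
    Function.Injective fun d : Fˣ => cubicProj (torus d) := by
  intro d d' h
  have hspan := congrFun h (span F {veronese ![1, 1]})
  simp only [cubicProj_span_veronese] at hspan
  obtain ⟨c, hc⟩ := mem_span_singleton.1 (hspan ▸ mem_span_singleton_self _)
  have hc1 : c = 1 := by simpa [veronese, torus] using congrFun hc 0
  exact Units.ext (by simpa [veronese, torus, hc1] using (congrFun hc 1).symm)

theorem encard_lineStab_pencilLine_zero (hF : 5 ≤ ENat.card F) (h2 : (2 : F) ≠ 0) :
    (lineStab F (pencilLine 0)).encard = ENat.card Fˣ := by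
  rw [lineStab_pencilLine_zero hF h2, ← Set.image_univ, cubicProj_torus_injective.encard_image,
    Set.encard_univ]

lemma range_cubicProj_torus : (Set.range fun d : Fˣ => cubicProj (torus d)) =
    {f | ∃ d : F, d ≠ 0 ∧ ∃ A : GL (Fin 4) F,
      (A : Matrix (Fin 4) (Fin 4) F) =
        !![1, 0, 0, 0; 0, d, 0, 0; 0, 0, d ^ 2, 0; 0, 0, 0, d ^ 3] ∧ f = projAct F A} := by
  ext f
  constructor
  · rintro ⟨d, rfl⟩
    exact ⟨d, d.ne_zero, symCubeGL (torus d), symCube_torus d, rfl⟩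
  · rintro ⟨d, hd, A, hA, rfl⟩
    have hsym : A = symCubeGL (torus (Units.mk0 d hd)) :=
      Units.ext (hA.trans (symCube_torus (Units.mk0 d hd)).symm)
    exact ⟨Units.mk0 d hd, congrArg (projAct F) hsym.symm⟩

theorem setOf_isUGamma_eq_lineOrbit (hF : 5 ≤ ENat.card F) (h2 : (2 : F) ≠ 0) :
    {W | isUGamma F W} = lineOrbit F (pencilLine 0) := by
  refine Set.Subset.antisymm ?_ ?_
  · rw [← range_uGammaLine]
    rintro _ ⟨⟨p, a⟩, rfl⟩
    refine ⟨_, cubicProj_mem_Gq (GeneralLinearGroup.upperRightHom (a / 2) * chart p), ?_⟩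
    rw [cubicProj_mul, cubicProj_upperRightHom_pencilLine_zero, mul_div_cancel₀ a h2, uGammaLine]
  · rintro _ ⟨f, hf, rfl⟩
    obtain ⟨g, rfl⟩ := (Gq_eq_range_cubicProj hF).le hf
    exact isUGamma_cubicProj g (isUGamma_pencilLine 0)

end Stabilizer

lemma two_ne_zero_of_odd_card {F : Type*} [Field F] [Fintype F] (hodd : Odd (Fintype.card F)) :
    (2 : F) ≠ 0 :=
  Ring.two_ne_zero fun h =>
    Nat.not_even_iff_odd.2 hodd (Nat.even_iff.2 (FiniteField.even_card_of_char_two h))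

end TwistedCubic

open TwistedCubic

theorem stmt_10_general (F : Type) [Field F] (hF : 5 ≤ ENat.card F) (h2 : (2 : F) ≠ 0) :
    isUGamma F (span F {![0, 0, 0, 1], ![0, 1, 0, 0]}) ∧
    {ℓ | isUGamma F ℓ} = lineOrbit F (span F {![0, 0, 0, 1], ![0, 1, 0, 0]}) ∧
    {ℓ | isUGamma F ℓ}.encard = ENat.card F ^ 2 + ENat.card F ∧
    lineStab F (span F {![0, 0, 0, 1], ![0, 1, 0, 0]}) =
      {f | ∃ d : F, d ≠ 0 ∧ ∃ A : GL (Fin 4) F,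
        (A : Matrix (Fin 4) (Fin 4) F) =
          !![1, 0, 0, 0; 0, d, 0, 0; 0, 0, d ^ 2, 0; 0, 0, 0, d ^ 3] ∧
        f = projAct F A} ∧
    (lineStab F (span F {![0, 0, 0, 1], ![0, 1, 0, 0]})).encard = ENat.card Fˣ :=
  ⟨isUGamma_pencilLine 0, setOf_isUGamma_eq_lineOrbit hF h2, encard_setOf_isUGamma,
    (lineStab_pencilLine_zero hF h2).trans range_cubicProj_torus,
    encard_lineStab_pencilLine_zero hF h2⟩

theorem stmt_10 (q : ℕ) (F : Type) [Field F] [Fintype F]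
    (hcard : Fintype.card F = q) (hq : 5 ≤ q) (hodd : Odd q) :
    isUGamma F (Submodule.span F ({![0, 0, 0, 1], ![0, 1, 0, 0]} : Set (Fin 4 → F))) ∧
    {ℓ : Submodule F (Fin 4 → F) | isUGamma F ℓ} = lineOrbit F (Submodule.span F ({![0, 0, 0, 1], ![0, 1, 0, 0]} : Set (Fin 4 → F))) ∧
    {ℓ : Submodule F (Fin 4 → F) | isUGamma F ℓ}.ncard = q ^ 2 + q ∧
    lineStab F (Submodule.span F ({![0, 0, 0, 1], ![0, 1, 0, 0]} : Set (Fin 4 → F))) =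
      {f | ∃ d : F, d ≠ 0 ∧ ∃ A : GL (Fin 4) F,
        (↑A : Matrix (Fin 4) (Fin 4) F) =
          !![1, 0, 0, 0; 0, d, 0, 0; 0, 0, d ^ 2, 0; 0, 0, 0, d ^ 3] ∧
        f = projAct F A} ∧
    (lineStab F (Submodule.span F ({![0, 0, 0, 1], ![0, 1, 0, 0]} : Set (Fin 4 → F)))).ncard = q - 1 := by
  subst hcard
  have hF : 5 ≤ ENat.card F := by
    rw [ENat.card_eq_coe_fintype_card]
    exact_mod_cast hq
  obtain ⟨hline, horbit, hcard, hstab, hcardStab⟩ :=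
    stmt_10_general F hF (two_ne_zero_of_odd_card hodd)
  classical
  refine ⟨hline, horbit, ?_, hstab, ?_⟩
  · rw [Set.ncard, hcard, ENat.card_eq_coe_fintype_card]
    norm_cast
  · rw [Set.ncard, hcardStab, ENat.card_eq_coe_fintype_card, ENat.toNat_natCast, Fintype.card_units]
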